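/- For every sequence t_1, t_2, ... of rationals, the formal power series Q = Q(x,z;t) and P = P(x,z;t) satisfy Q * (1 + z*P) = P in \mathbb{Q}[[x,z]]; equivalently, Q = 1 + \sum_{p\ge 1} t_p (x*P)^p, where the infinite series converges coefficientwise. -/

import Mathlib

open Finset

inductive Step : Type
  | u | d | h
deriving DecidableEq

/-- Lengths of maximal blocks of letters with `wt s ≠ none`, weighted by `wt`. -/
def runs (wt : Step → Option ℕ) : List Step → List ℕ
  | [] => []
  | s :: l =>
    match wt s, runs wt l with
    | none, r => r
    | some n, r =>
      match l with
      | [] => [n]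
      | s' :: _ =>
        match wt s' with
        | none => n :: r
        | some _ =>
          match r with
          | a :: rest => (n + a) :: rest
          | [] => [n]

def uRuns : List Step → List ℕ :=
  runs (fun s => match s with | Step.u => some 1 | _ => none)

def uhRuns (k : ℕ) : List Step → List ℕ :=
  runs (fun s => match s with | Step.u => some 1 | Step.h => some k | Step.d => none)

def alpha (i : ℕ) (w : List Step) : ℕ := (uRuns w).count i

def beta (i : ℕ) (w : List Step) : ℕ := (uRuns w).tail.count i

def IsNonneg (w : List Step) : Prop :=
  ∀ i : ℕ, (w.take i).count Step.d ≤ (w.take i).count Step.u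

def pathSet (m j : ℕ) : Set (List Step) :=
  {w | w.count Step.u = m ∧ w.count Step.d = m ∧ w.count Step.h = j ∧ IsNonneg w}

/-- no horizontal step lies on the x-axis -/
def NoLowH (w : List Step) : Prop :=
  ∀ (i : ℕ) (hi : i < w.length), w[i]'hi = Step.h →
    (w.take i).count Step.u ≠ (w.take i).count Step.d

def qSet (m j : ℕ) : Set (List Step) :=
  {w | w ∈ pathSet m j ∧ NoLowH w}

/-- normalized partial Bell polynomial (r!/m!) B_{m,r}(1!t₁,2!t₂,…) -/
def bellNorm (m r : ℕ) (t : ℕ → ℚ) : ℚ :=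
  ∑ f : Fin m → Fin (m + 1),
    if (∑ i : Fin m, (f i : ℕ)) = r ∧ (∑ i : Fin m, ((i : ℕ) + 1) * (f i : ℕ)) = m then
      (r.factorial : ℚ) / (∏ i : Fin m, ((f i : ℕ).factorial : ℚ)) * ∏ i : Fin m, t ((i : ℕ) + 1) ^ (f i : ℕ)
    else 0

/-- normalized potential polynomial  P_p^{(lam)}(1!t₁,2!t₂,…)/p! -/
def potential (lam p : ℕ) (t : ℕ → ℚ) : ℚ :=
  ∑ r ∈ Finset.range (p + 1), (Nat.choose lam r : ℚ) * bellNorm p r t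


noncomputable def pathGF (t : ℕ → ℚ) : MvPowerSeries (Fin 2) ℚ :=
  fun d => ∑ᶠ w ∈ pathSet (d 0) (d 1), ∏ i ∈ Finset.Icc 1 (d 0), t i ^ alpha i w

noncomputable def qGF (t : ℕ → ℚ) : MvPowerSeries (Fin 2) ℚ :=
  fun d => ∑ᶠ w ∈ qSet (d 0) (d 1), ∏ i ∈ Finset.Icc 1 (d 0), t i ^ alpha i w

/-!
A path is a path without horizontal steps on the axis, possibly followed by a first horizontal
step on the axis and an arbitrary path; hence `P = Q + z Q P`.

A path from height `p` to `0` without horizontal steps on the axis splits at its first descents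
below the heights `p, …, 1`, so such paths have generating function `P ^ p * Q`. Those starting
with `d` or `h` are counted by `P ^ (p - 1) * Q + z * P ^ p * Q = P ^ p` when `0 < p`, by the first
identity. Removing the initial run `u ^ p` of a word counted by `Q` leaves exactly such a path,
whence `Q = 1 + ∑ t_p (x P) ^ p`.
-/

/-! ### Generating functions of weighted sets -/

section GenFun

open MvPowerSeries

variable {α β σ R : Type*} [CommSemiring R]

/-- The generating function `∑_{a ∈ S} wt(a) x^{deg(a)}` of a weighted, graded set. If a fibre of
`deg` contains infinitely many elements of `S` of nonzero weight, the coefficient is the junk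
value `0` of `finsum`. -/
noncomputable def genFun (deg : α → σ →₀ ℕ) (wt : α → R) (S : Set α) : MvPowerSeries σ R :=
  fun n => ∑ᶠ a ∈ S ∩ deg ⁻¹' {n}, wt a

/-- `S` has finitely many elements of each degree, so that `genFun` is a genuine sum over `S`. -/
def HasFiniteFibers (deg : α → σ →₀ ℕ) (S : Set α) : Prop :=
  ∀ n, (S ∩ deg ⁻¹' {n}).Finite

variable {deg : α → σ →₀ ℕ} {wt : α → R} {S T : Set α}

lemma HasFiniteFibers.mono (hT : HasFiniteFibers deg T) (h : S ⊆ T) : HasFiniteFibers deg S :=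
  fun n => (hT n).subset (Set.inter_subset_inter_left _ h)

lemma HasFiniteFibers.prod {deg' : β → σ →₀ ℕ} {T : Set β}
    (hS : HasFiniteFibers deg S) (hT : HasFiniteFibers deg' T) :
    HasFiniteFibers (fun x : α × β => deg x.1 + deg' x.2) (S ×ˢ T) := by
  classical
  refine fun n => ((antidiagonal n).finite_toSet.biUnion
    fun p _ => (hS p.1).prod (hT p.2)).subset ?_
  rintro ⟨a, b⟩ ⟨⟨ha, hb⟩, hn⟩
  exact Set.mem_biUnion (x := (deg a, deg' b)) (by simpa using hn) ⟨⟨ha, rfl⟩, ⟨hb, rfl⟩⟩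

lemma coeff_genFun (n : σ →₀ ℕ) :
    coeff n (genFun deg wt S) = ∑ᶠ a ∈ S ∩ deg ⁻¹' {n}, wt a := rfl

lemma genFun_singleton (a : α) : genFun deg wt {a} = monomial (deg a) (wt a) := by
  classical
  ext n
  rw [coeff_genFun, coeff_monomial]
  split_ifs with h
  · rw [Set.inter_eq_left.2 (by simp [h]), finsum_mem_singleton]
  · rw [Set.singleton_inter_eq_empty.2 (by simpa using Ne.symm h), finsum_mem_empty]

lemma genFun_union (hS : HasFiniteFibers deg S) (hT : HasFiniteFibers deg T)
    (hST : Disjoint S T) : genFun deg wt (S ∪ T) = genFun deg wt S + genFun deg wt T := by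
  ext n
  rw [map_add, coeff_genFun, coeff_genFun, coeff_genFun, Set.union_inter_distrib_right,
    finsum_mem_union (hST.mono Set.inter_subset_left Set.inter_subset_left) (hS n) (hT n)]

lemma genFun_eq_sum_fiberwise {ι : Type*} {I : Finset ι} {f : α → ι}
    (hS : HasFiniteFibers deg S) (hf : ∀ a ∈ S, f a ∈ I) :
    genFun deg wt S = ∑ i ∈ I, genFun deg wt {a | a ∈ S ∧ f a = i} := by
  ext n
  have hcover : S ∩ deg ⁻¹' {n} = ⋃ i ∈ (I : Set ι), {a | a ∈ S ∧ f a = i} ∩ deg ⁻¹' {n} := by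
    ext a
    simpa [and_right_comm] using fun ha _ => hf a ha
  have hdisj : (I : Set ι).PairwiseDisjoint fun i => {a | a ∈ S ∧ f a = i} ∩ deg ⁻¹' {n} :=
    fun i _ j _ hij => Set.disjoint_left.2 fun a ha hb => hij (ha.1.2.symm.trans hb.1.2)
  rw [map_sum, coeff_genFun, hcover, finsum_mem_biUnion hdisj I.finite_toSet
    fun i _ => hS.mono (fun _ ha => ha.1) n, finsum_mem_coe_finset]
  rfl

lemma genFun_image {deg' : β → σ →₀ ℕ} {wt' : β → R} {f : α → β} {e : σ →₀ ℕ} {c : R}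
    (hS : HasFiniteFibers deg S) (hf : Set.InjOn f S)
    (hdeg : ∀ a ∈ S, deg' (f a) = e + deg a) (hwt : ∀ a ∈ S, wt' (f a) = c * wt a) :
    genFun deg' wt' (f '' S) = monomial e c * genFun deg wt S := by
  classical
  ext n
  rw [coeff_genFun, coeff_monomial_mul, ← Set.image_inter_preimage]
  split_ifs with hen
  · have hfiber : S ∩ f ⁻¹' (deg' ⁻¹' {n}) = S ∩ deg ⁻¹' {n - e} := by
      ext a
      refine and_congr_right fun ha => ?_
      rw [Set.mem_preimage, Set.mem_preimage, Set.mem_preimage, hdeg a ha,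
        Set.mem_singleton_iff, Set.mem_singleton_iff, eq_tsub_iff_add_eq_of_le hen, add_comm]
    rw [hfiber, finsum_mem_image (hf.mono Set.inter_subset_left), coeff_genFun,
      mul_finsum_mem' _ _ (hS _)]
    exact finsum_mem_congr rfl fun a ha => hwt a ha.1
  · have hfiber : S ∩ f ⁻¹' (deg' ⁻¹' {n}) = ∅ := by
      refine Set.eq_empty_iff_forall_notMem.2 fun a ⟨ha, hn⟩ => hen ?_
      rw [Set.mem_preimage, Set.mem_preimage, hdeg a ha, Set.mem_singleton_iff] at hn
      exact hn ▸ le_self_add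
    rw [hfiber, Set.image_empty, finsum_mem_empty]

lemma genFun_prod {deg' : β → σ →₀ ℕ} {wt' : β → R} {T : Set β}
    (hS : HasFiniteFibers deg S) (hT : HasFiniteFibers deg' T) :
    genFun (fun x : α × β => deg x.1 + deg' x.2) (fun x => wt x.1 * wt' x.2) (S ×ˢ T) =
      genFun deg wt S * genFun deg' wt' T := by
  classical
  ext n
  rw [coeff_mul, coeff_genFun, finsum_mem_eq_finite_toFinset_sum _ (hS.prod hT n),
    ← sum_fiberwise_of_maps_to (g := fun x => (deg x.1, deg' x.2)) (t := antidiagonal n)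
      fun x hx => by simpa using ((Set.Finite.mem_toFinset _).1 hx).2]
  refine sum_congr rfl fun p hp => ?_
  rw [coeff_genFun, coeff_genFun, finsum_mem_eq_finite_toFinset_sum _ (hS p.1),
    finsum_mem_eq_finite_toFinset_sum _ (hT p.2), sum_mul_sum, ← sum_product']
  refine sum_congr ?_ fun _ _ => rfl
  ext ⟨a, b⟩
  rw [HasAntidiagonal.mem_antidiagonal] at hp
  simp only [mem_filter, Set.Finite.mem_toFinset, mem_product, Set.mem_inter_iff, Set.mem_prod,
    Set.mem_preimage, Set.mem_singleton_iff, Prod.ext_iff]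
  constructor
  · rintro ⟨⟨⟨ha, hb⟩, -⟩, hda, hdb⟩
    exact ⟨⟨ha, hda⟩, hb, hdb⟩
  · rintro ⟨⟨ha, hda⟩, hb, hdb⟩
    exact ⟨⟨⟨ha, hb⟩, by rw [hda, hdb, hp]⟩, hda, hdb⟩

end GenFun

/-! ### Runs of up-steps -/

/-- The length of the initial run of up-steps of a word. -/
def leadingUps (w : List Step) : ℕ := (w.takeWhile (· = Step.u)).length

@[simp] lemma leadingUps_nil : leadingUps [] = 0 := rfl

@[simp] lemma leadingUps_u_cons (w : List Step) : leadingUps (Step.u :: w) = leadingUps w + 1 := by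
  simp [leadingUps]

@[simp] lemma leadingUps_d_cons (w : List Step) : leadingUps (Step.d :: w) = 0 := by
  simp [leadingUps]

@[simp] lemma leadingUps_h_cons (w : List Step) : leadingUps (Step.h :: w) = 0 := by
  simp [leadingUps]

lemma leadingUps_le_count (w : List Step) : leadingUps w ≤ w.count Step.u := by
  induction w with
  | nil => simp
  | cons s w ih => cases s <;> simp [ih]

lemma leadingUps_replicate_append (p : ℕ) (w : List Step) :
    leadingUps (List.replicate p Step.u ++ w) = p + leadingUps w := by
  induction p with
  | zero => simp
  | succ p ih => simp [List.replicate_succ, ih, Nat.add_right_comm]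

lemma exists_eq_replicate_append (w : List Step) :
    ∃ v, leadingUps v = 0 ∧ w = List.replicate (leadingUps w) Step.u ++ v := by
  induction w with
  | nil => exact ⟨[], rfl, rfl⟩
  | cons s w ih =>
    cases s
    case u =>
      obtain ⟨v, hv, hw⟩ := ih
      exact ⟨v, hv, by rw [leadingUps_u_cons, List.replicate_succ, List.cons_append, ← hw]⟩
    case d => exact ⟨Step.d :: w, by simp⟩
    case h => exact ⟨Step.h :: w, by simp⟩

@[simp] lemma uRuns_nil : uRuns [] = [] := rfl

@[simp] lemma uRuns_d_cons (w : List Step) : uRuns (Step.d :: w) = uRuns w := by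
  simp [uRuns, runs]

@[simp] lemma uRuns_h_cons (w : List Step) : uRuns (Step.h :: w) = uRuns w := by
  simp [uRuns, runs]

lemma uRuns_u_cons_of_leadingUps_eq_zero {w : List Step} (hw : leadingUps w = 0) :
    uRuns (Step.u :: w) = 1 :: uRuns w := by
  rcases w with _ | ⟨_ | _ | _, w⟩
  · rfl
  · simp at hw
  all_goals simp [uRuns, runs]

lemma exists_uRuns_u_cons_eq_cons (w : List Step) : ∃ a l, uRuns (Step.u :: w) = a :: l := by
  rcases w with _ | ⟨_ | _ | _, w⟩
  · exact ⟨1, [], rfl⟩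
  · simp only [uRuns, runs.eq_def _ (Step.u :: Step.u :: w)]
    split <;> exact ⟨_, _, rfl⟩
  all_goals exact ⟨_, _, uRuns_u_cons_of_leadingUps_eq_zero (by simp)⟩

lemma uRuns_u_u_cons (w : List Step) :
    uRuns (Step.u :: Step.u :: w) = (uRuns (Step.u :: w)).modifyHead (· + 1) := by
  obtain ⟨a, l, h⟩ := exists_uRuns_u_cons_eq_cons w
  rw [h, List.modifyHead_cons, add_comm]
  simp only [uRuns] at h ⊢
  rw [runs.eq_def]
  simp only [h]

lemma uRuns_induction {motive : List Step → Prop} (nil : motive [])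
    (d : ∀ w, motive w → motive (Step.d :: w)) (h : ∀ w, motive w → motive (Step.h :: w))
    (u : ∀ w, leadingUps w = 0 → motive w → motive (Step.u :: w))
    (uu : ∀ w, motive (Step.u :: w) → motive (Step.u :: Step.u :: w)) (w : List Step) :
    motive w := by
  induction w with
  | nil => exact nil
  | cons s w ih =>
    cases s
    case d => exact d w ih
    case h => exact h w ih
    case u =>
      rcases w with _ | ⟨_ | _ | _, w⟩
      case cons.u => exact uu w ih
      all_goals exact u _ (by simp) ih

lemma uRuns_append {w : List Step} (hw : leadingUps w = 0) (v : List Step) :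
    uRuns (v ++ w) = uRuns v ++ uRuns w := by
  induction v using uRuns_induction with
  | nil => simp
  | d v ih => simpa using ih
  | h v ih => simpa using ih
  | u v hv ih =>
    have hvw : leadingUps (v ++ w) = 0 := by
      rcases v with _ | ⟨_ | _ | _, v⟩ <;> simp_all
    rw [List.cons_append, uRuns_u_cons_of_leadingUps_eq_zero hvw,
      uRuns_u_cons_of_leadingUps_eq_zero hv, ih, List.cons_append]
  | uu v ih =>
    obtain ⟨a, l, h⟩ := exists_uRuns_u_cons_eq_cons v
    rw [List.cons_append, List.cons_append, uRuns_u_u_cons, ← List.cons_append, ih,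
      uRuns_u_u_cons, h]
    rfl

lemma uRuns_replicate_succ (p : ℕ) : uRuns (List.replicate (p + 1) Step.u) = [p + 1] := by
  induction p with
  | zero => rfl
  | succ p ih =>
    rw [List.replicate_succ, List.replicate_succ, uRuns_u_u_cons, ← List.replicate_succ, ih]
    rfl

lemma sum_uRuns (w : List Step) : (uRuns w).sum = w.count Step.u := by
  induction w using uRuns_induction with
  | nil => rfl
  | d w ih => simpa using ih
  | h w ih => simpa using ih
  | u w hw ih => simp [uRuns_u_cons_of_leadingUps_eq_zero hw, ih, add_comm]
  | uu w ih =>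
    obtain ⟨a, l, h⟩ := exists_uRuns_u_cons_eq_cons w
    rw [h, List.sum_cons] at ih
    rw [uRuns_u_u_cons, h, List.modifyHead_cons, List.sum_cons, List.count_cons_self, ← ih,
      Nat.add_right_comm]

lemma pos_of_mem_uRuns {w : List Step} {i : ℕ} (hi : i ∈ uRuns w) : 0 < i := by
  induction w using uRuns_induction generalizing i with
  | nil => simp at hi
  | d w ih => exact ih (by simpa using hi)
  | h w ih => exact ih (by simpa using hi)
  | u w hw ih =>
    rw [uRuns_u_cons_of_leadingUps_eq_zero hw, List.mem_cons] at hi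
    exact hi.elim (fun h => h ▸ one_pos) ih
  | uu w ih =>
    obtain ⟨a, l, h⟩ := exists_uRuns_u_cons_eq_cons w
    rw [uRuns_u_u_cons, h, List.modifyHead_cons, List.mem_cons] at hi
    exact hi.elim (fun h => h ▸ a.succ_pos) fun hi => ih (h ▸ List.mem_cons_of_mem a hi)

/-! ### The weight and the degree of a word -/

section Words

open MvPowerSeries

variable {R : Type*} [CommSemiring R] (t : ℕ → R)

/-- The weight `∏ i, t_i ^ alpha i w` of a word, written as a product over its runs of up-steps. -/
def runWeight (w : List Step) : R := ((uRuns w).map t).prod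

/-- The exponent of `x ^ m * z ^ j` for a word with `m` up-steps and `j` horizontal steps, where
the variables `x` and `z` have indices `0` and `1`. -/
noncomputable def wordDegree (w : List Step) : Fin 2 →₀ ℕ :=
  Finsupp.single 0 (w.count Step.u) + Finsupp.single 1 (w.count Step.h)

lemma prod_pow_alpha (w : List Step) :
    ∏ i ∈ Icc 1 (w.count Step.u), t i ^ alpha i w = runWeight t w := by
  rw [runWeight, prod_list_map_count]
  symm
  refine prod_subset (fun i hi => ?_) fun i _ hi => ?_
  · rw [List.mem_toFinset] at hi
    exact mem_Icc.2 ⟨pos_of_mem_uRuns hi, sum_uRuns w ▸ List.le_sum_of_mem hi⟩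
  · rw [List.count_eq_zero_of_not_mem (by simpa using hi), pow_zero]

lemma runWeight_append (v : List Step) {w : List Step} (hw : leadingUps w = 0) :
    runWeight t (v ++ w) = runWeight t v * runWeight t w := by
  simp [runWeight, uRuns_append hw]

lemma wordDegree_eq_iff {w : List Step} {n : Fin 2 →₀ ℕ} :
    wordDegree w = n ↔ w.count Step.u = n 0 ∧ w.count Step.h = n 1 := by
  simp [Finsupp.ext_iff, Fin.forall_fin_two, wordDegree]

lemma wordDegree_append (v w : List Step) :
    wordDegree (v ++ w) = wordDegree v + wordDegree w := by
  simp [wordDegree, add_add_add_comm]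

lemma length_eq_count_add_count_add_count (w : List Step) :
    w.length = w.count Step.u + w.count Step.d + w.count Step.h := by
  induction w with
  | nil => rfl
  | cons s w ih => cases s <;> simp [ih] <;> omega

instance : Fintype Step := ⟨{Step.u, Step.d, Step.h}, by rintro (_ | _ | _) <;> simp⟩

lemma hasFiniteFibers_of_count_le {S : Set (List Step)} (c : ℕ)
    (hS : ∀ w ∈ S, w.count Step.d ≤ w.count Step.u + c) : HasFiniteFibers wordDegree S := by
  refine fun n => (List.finite_length_le Step (n 0 + (n 0 + c) + n 1)).subset ?_
  rintro w ⟨hw, hn⟩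
  obtain ⟨hu, hh⟩ := wordDegree_eq_iff.1 hn
  have := hS w hw
  have := length_eq_count_add_count_add_count w
  simp only [Set.mem_ofPred_eq]
  omega

lemma genFun_singleton_nil : genFun wordDegree (runWeight t) {[]} = 1 := by
  have hdeg : wordDegree [] = 0 := by simp [wordDegree]
  rw [genFun_singleton, hdeg]
  rfl

lemma genFun_append_left {S : Set (List Step)} (hS : HasFiniteFibers wordDegree S)
    (v : List Step) (hlead : ∀ w ∈ S, leadingUps w = 0) :
    genFun wordDegree (runWeight t) ((v ++ ·) '' S) =
      monomial (wordDegree v) (runWeight t v) * genFun wordDegree (runWeight t) S :=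
  genFun_image hS (List.append_right_injective v).injOn
    (fun w _ => wordDegree_append v w) fun w hw => runWeight_append t v (hlead w hw)

lemma eq_and_eq_of_append_cons_eq {S : Set (List Step)} {s : Step}
    (hS : ∀ v ∈ S, ∀ w, v ++ s :: w ∉ S) {v v' w w' : List Step} (hv : v ∈ S) (hv' : v' ∈ S)
    (h : v ++ s :: w = v' ++ s :: w') : v = v' ∧ w = w' := by
  obtain ⟨a, rfl, ha⟩ | ⟨a, rfl, ha⟩ := List.append_eq_append_iff.1 h
  all_goals
    rcases a with _ | ⟨b, a⟩
    · simp_all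
    · obtain ⟨rfl, -⟩ := List.cons_eq_cons.1 ha
      first | exact absurd hv' (hS _ hv _) | exact absurd hv (hS _ hv' _)

lemma genFun_append_cons {S T : Set (List Step)} (hS : HasFiniteFibers wordDegree S)
    (hT : HasFiniteFibers wordDegree T) {s : Step} (hs : s ≠ Step.u)
    (hprefix : ∀ v ∈ S, ∀ w, v ++ s :: w ∉ S) :
    genFun wordDegree (runWeight t) (Set.image2 (fun v w => v ++ s :: w) S T) =
      monomial (wordDegree [s]) 1 *
        (genFun wordDegree (runWeight t) S * genFun wordDegree (runWeight t) T) := by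
  rw [← genFun_prod hS hT, ← Set.image_prod]
  refine genFun_image (hS.prod hT) ?_ (fun x _ => ?_) fun x _ => ?_
  · rintro ⟨v, w⟩ ⟨hv, -⟩ ⟨v', w'⟩ ⟨hv', -⟩ h
    exact Prod.ext_iff.2 (eq_and_eq_of_append_cons_eq hprefix hv hv' h)
  · rw [← List.singleton_append, wordDegree_append, wordDegree_append, add_left_comm]
  · have hlead : leadingUps (s :: x.2) = 0 := by cases s <;> simp_all
    have hruns : uRuns (s :: x.2) = uRuns x.2 := by cases s <;> simp_all
    rw [runWeight_append t _ hlead, one_mul, runWeight, runWeight, runWeight, hruns]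

lemma genFun_cons {T : Set (List Step)} (hT : HasFiniteFibers wordDegree T) {s : Step}
    (hs : s ≠ Step.u) :
    genFun wordDegree (runWeight t) ((s :: ·) '' T) =
      monomial (wordDegree [s]) 1 * genFun wordDegree (runWeight t) T := by
  have hnil : HasFiniteFibers wordDegree {([] : List Step)} :=
    fun _ => (Set.finite_singleton _).inter_of_left _
  simpa [genFun_singleton_nil] using genFun_append_cons t hnil hT hs (by simp)

lemma monomial_wordDegree_d : monomial (wordDegree [Step.d]) (1 : R) = 1 := by
  simp [wordDegree]

lemma monomial_wordDegree_h : monomial (wordDegree [Step.h]) (1 : R) = X 1 := by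
  simp [wordDegree, X]

end Words

/-! ### Paths ending on the axis -/

/-- The word describes a path from height `p` to height `0` that never goes below the axis and
has horizontal steps only at heights `k` with `H k`. -/
def IsPathFrom (H : ℕ → Prop) : ℕ → List Step → Prop
  | p, [] => p = 0
  | p, Step.u :: w => IsPathFrom H (p + 1) w
  | 0, Step.d :: _ => False
  | p + 1, Step.d :: w => IsPathFrom H p w
  | p, Step.h :: w => H p ∧ IsPathFrom H p w

/-- The heights at which the paths counted by `Q` may have horizontal steps. -/
abbrev OffAxis (k : ℕ) : Prop := k ≠ 0

section Paths

variable {H H' : ℕ → Prop} {p q r : ℕ} {v w : List Step}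

@[simp] lemma isPathFrom_nil : IsPathFrom H p [] ↔ p = 0 := by simp [IsPathFrom]

@[simp] lemma isPathFrom_u_cons : IsPathFrom H p (Step.u :: w) ↔ IsPathFrom H (p + 1) w := by
  simp [IsPathFrom]

@[simp] lemma not_isPathFrom_zero_d_cons : ¬ IsPathFrom H 0 (Step.d :: w) := by
  simp [IsPathFrom]

@[simp] lemma isPathFrom_succ_d_cons : IsPathFrom H (p + 1) (Step.d :: w) ↔ IsPathFrom H p w := by
  simp [IsPathFrom]

@[simp] lemma isPathFrom_h_cons :
    IsPathFrom H p (Step.h :: w) ↔ H p ∧ IsPathFrom H p w := by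
  simp [IsPathFrom]

lemma isPathFrom_iff : IsPathFrom H p w ↔
    w.count Step.d = w.count Step.u + p ∧
    (∀ i, (w.take i).count Step.d ≤ (w.take i).count Step.u + p) ∧
    ∀ i, w[i]? = some Step.h → H ((w.take i).count Step.u + p - (w.take i).count Step.d) := by
  induction w generalizing p with
  | nil => simp [eq_comm]
  | cons s w ih =>
    rw [← Nat.and_forall_add_one, ← Nat.and_forall_add_one (p := fun i => _ → _)]
    cases s
    case u => simp [ih, Nat.add_right_comm _ 1, add_assoc]
    case d =>
      cases p with
      | zero => exact iff_of_false not_isPathFrom_zero_d_cons fun h => by simpa using h.2.1.2 0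
      | succ p => simp [ih, ← add_assoc]
    case h => simp [ih, and_left_comm]

lemma mem_pathSet_iff {m j : ℕ} : w ∈ pathSet m j ↔
    IsPathFrom ⊤ 0 w ∧ w.count Step.u = m ∧ w.count Step.h = j := by
  simp only [isPathFrom_iff, pathSet, IsNonneg, Set.mem_ofPred_eq, Pi.top_apply,
    Prop.top_eq_true, implies_true, and_true, add_zero]
  grind

lemma mem_qSet_iff {m j : ℕ} : w ∈ qSet m j ↔
    IsPathFrom OffAxis 0 w ∧ w.count Step.u = m ∧ w.count Step.h = j := by
  simp only [isPathFrom_iff, qSet, pathSet, IsNonneg, NoLowH, Set.mem_ofPred_eq,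
    List.getElem?_eq_some_iff, forall_exists_index]
  grind

lemma IsPathFrom.mono (hw : IsPathFrom H p w) (hH : H ≤ H') : IsPathFrom H' p w := by
  rw [isPathFrom_iff] at hw ⊢
  exact ⟨hw.1, hw.2.1, fun i hi => hH _ (hw.2.2 i hi)⟩

lemma IsPathFrom.append_iff (hv : IsPathFrom H q v) (hH : ∀ k, H k → H' (k + r)) :
    IsPathFrom H' (q + r) (v ++ w) ↔ IsPathFrom H' r w := by
  induction v generalizing q with
  | nil => simp_all
  | cons s v ih =>
    cases s
    case u => simpa [Nat.add_right_comm] using ih (isPathFrom_u_cons.1 hv)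
    case d =>
      cases q with
      | zero => simp at hv
      | succ q => simpa [Nat.add_right_comm] using ih (isPathFrom_succ_d_cons.1 hv)
    case h =>
      rw [isPathFrom_h_cons] at hv
      simpa [hH _ hv.1] using ih hv.2

lemma IsPathFrom.exists_append_d_cons (hw : IsPathFrom H (q + r + 1) w) :
    ∃ v, IsPathFrom (fun k => H (k + r + 1)) q v ∧ ∃ v', IsPathFrom H r v' ∧
      v ++ Step.d :: v' = w := by
  induction w generalizing q with
  | nil => simp at hw
  | cons s w ih =>
    cases s
    case u =>
      rw [isPathFrom_u_cons, Nat.add_right_comm q] at hw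
      obtain ⟨v, hv, v', hv', rfl⟩ := ih hw
      exact ⟨Step.u :: v, by simpa using hv, v', hv', rfl⟩
    case d =>
      rw [isPathFrom_succ_d_cons] at hw
      cases q with
      | zero => exact ⟨[], by simp, w, by simpa using hw, rfl⟩
      | succ q =>
        rw [Nat.add_right_comm q] at hw
        obtain ⟨v, hv, v', hv', rfl⟩ := ih hw
        exact ⟨Step.d :: v, by simpa using hv, v', hv', rfl⟩
    case h =>
      rw [isPathFrom_h_cons] at hw
      obtain ⟨v, hv, v', hv', rfl⟩ := ih hw.2
      exact ⟨Step.h :: v, by simpa using ⟨hw.1, hv⟩, v', hv', rfl⟩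

lemma IsPathFrom.offAxis_or_exists_append_h_cons (hw : IsPathFrom ⊤ p w) :
    IsPathFrom OffAxis p w ∨
      ∃ v, IsPathFrom OffAxis p v ∧ ∃ v', IsPathFrom ⊤ 0 v' ∧ v ++ Step.h :: v' = w := by
  induction w generalizing p with
  | nil => exact Or.inl hw
  | cons s w ih =>
    cases s
    case u =>
      refine (ih (isPathFrom_u_cons.1 hw)).imp id ?_
      rintro ⟨v, hv, v', hv', rfl⟩
      exact ⟨Step.u :: v, hv, v', hv', rfl⟩
    case d =>
      cases p with
      | zero => simp at hw
      | succ p =>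
        refine (ih (isPathFrom_succ_d_cons.1 hw)).imp id ?_
        rintro ⟨v, hv, v', hv', rfl⟩
        exact ⟨Step.d :: v, hv, v', hv', rfl⟩
    case h =>
      rw [isPathFrom_h_cons] at hw
      rcases eq_or_ne p 0 with rfl | hp
      · exact Or.inr ⟨[], rfl, w, hw.2, rfl⟩
      · refine (ih hw.2).imp (fun h => isPathFrom_h_cons.2 ⟨hp, h⟩) ?_
        rintro ⟨v, hv, v', hv', rfl⟩
        exact ⟨Step.h :: v, isPathFrom_h_cons.2 ⟨hp, hv⟩, v', hv', rfl⟩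

lemma IsPathFrom.not_append_cons {s : Step} (hv : IsPathFrom H q v)
    (hs : ∀ w, ¬ IsPathFrom H 0 (s :: w)) : ¬ IsPathFrom H q (v ++ s :: w) := by
  rw [← add_zero q, hv.append_iff (by simp)]
  exact hs w

lemma isPathFrom_replicate_append :
    IsPathFrom H q (List.replicate p Step.u ++ w) ↔ IsPathFrom H (q + p) w := by
  induction p generalizing q with
  | zero => simp
  | succ p ih => simp [List.replicate_succ, ih, add_assoc, add_comm 1]

lemma hasFiniteFibers_isPathFrom (H : ℕ → Prop) (p : ℕ) :
    HasFiniteFibers wordDegree {w | IsPathFrom H p w} :=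
  hasFiniteFibers_of_count_le p fun _ hw => (isPathFrom_iff.1 hw).1.le

end Paths

/-! ### Generating functions of paths -/

section PathSeries

open MvPowerSeries

variable {R : Type*} [CommSemiring R] (t : ℕ → R)

/-- The generating function of the paths `IsPathFrom H p`. The paper's `P` and `Q` are the cases
`p = 0` of `H = ⊤` and `H = OffAxis`. -/
noncomputable def pathSeries (H : ℕ → Prop) (p : ℕ) : MvPowerSeries (Fin 2) R :=
  genFun wordDegree (runWeight t) {w | IsPathFrom H p w}

lemma pathGF_eq_pathSeries (t : ℕ → ℚ) : pathGF t = pathSeries t ⊤ 0 := by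
  funext n
  refine finsum_mem_congr ?_ fun w hw => ?_
  · ext w
    simp [mem_pathSet_iff, wordDegree_eq_iff]
  · rw [← prod_pow_alpha, (wordDegree_eq_iff.1 hw.2).1]

lemma qGF_eq_pathSeries (t : ℕ → ℚ) : qGF t = pathSeries t OffAxis 0 := by
  funext n
  refine finsum_mem_congr ?_ fun w hw => ?_
  · ext w
    simp [mem_qSet_iff, wordDegree_eq_iff]
  · rw [← prod_pow_alpha, (wordDegree_eq_iff.1 hw.2).1]

lemma pathSeries_offAxis_mul :
    pathSeries t OffAxis 0 * (1 + X 1 * pathSeries t ⊤ 0) = pathSeries t ⊤ 0 := by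
  have hnot : ∀ w, ¬ IsPathFrom OffAxis 0 (Step.h :: w) := by simp
  have hjoin : ∀ {v w}, IsPathFrom OffAxis 0 v → IsPathFrom ⊤ 0 w →
      IsPathFrom ⊤ 0 (v ++ Step.h :: w) :=
    fun hv hw => (hv.append_iff (r := 0) fun _ _ => trivial).2 (by simpa using hw)
  have hsplit : {w | IsPathFrom ⊤ 0 w} = {w | IsPathFrom OffAxis 0 w} ∪
      Set.image2 (fun v w => v ++ Step.h :: w) {v | IsPathFrom OffAxis 0 v}
        {w | IsPathFrom ⊤ 0 w} := by
    refine Set.Subset.antisymm (fun w hw => hw.offAxis_or_exists_append_h_cons) ?_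
    rintro _ (hw | ⟨v, hv, w, hw, rfl⟩)
    exacts [hw.mono le_top, hjoin hv hw]
  have hdisj : Disjoint {w | IsPathFrom OffAxis 0 w}
      (Set.image2 (fun v w => v ++ Step.h :: w) {v | IsPathFrom OffAxis 0 v}
        {w | IsPathFrom ⊤ 0 w}) := by
    refine Set.disjoint_left.2 ?_
    rintro _ hvw ⟨v, hv, w, -, rfl⟩
    exact hv.not_append_cons hnot hvw
  have hP := hasFiniteFibers_isPathFrom ⊤ 0
  have hQ := hasFiniteFibers_isPathFrom OffAxis 0
  conv_rhs => rw [pathSeries, hsplit]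
  rw [genFun_union hQ (hP.mono fun _ hw => hsplit.ge (Or.inr hw)) hdisj,
    genFun_append_cons t hQ hP (by simp) fun v hv w => hv.not_append_cons hnot,
    monomial_wordDegree_h, mul_add, mul_one, mul_left_comm]
  rfl

lemma pathSeries_succ (H : ℕ → Prop) (p : ℕ) :
    pathSeries t H (p + 1) = pathSeries t (fun k => H (k + p + 1)) 0 * pathSeries t H p := by
  have hsplit : {w | IsPathFrom H (p + 1) w} = Set.image2 (fun v w => v ++ Step.d :: w)
      {v | IsPathFrom (fun k => H (k + p + 1)) 0 v} {w | IsPathFrom H p w} := by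
    refine Set.Subset.antisymm
      (fun w hw => IsPathFrom.exists_append_d_cons (q := 0) (by simpa using hw)) ?_
    rintro _ ⟨v, hv, w, hw, rfl⟩
    simpa using (hv.append_iff (H' := H) (r := p + 1) (w := Step.d :: w) fun _ h => h).2
      (isPathFrom_succ_d_cons.2 hw)
  rw [pathSeries, hsplit, genFun_append_cons t (hasFiniteFibers_isPathFrom _ 0)
    (hasFiniteFibers_isPathFrom H p) (by simp) fun v hv w => hv.not_append_cons (by simp),
    monomial_wordDegree_d, one_mul]
  rfl

lemma pathSeries_offAxis (p : ℕ) : pathSeries t OffAxis p =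
    pathSeries t ⊤ 0 ^ p * pathSeries t OffAxis 0 := by
  induction p with
  | zero => simp
  | succ p ih =>
    have htop : (fun k => OffAxis (k + p + 1)) = ⊤ := funext fun k => eq_true (Nat.succ_ne_zero _)
    rw [pathSeries_succ, htop, ih, pow_succ', mul_assoc]

lemma genFun_succ_leadingUps_eq_zero {H : ℕ → Prop} {p : ℕ} (hH : H (p + 1)) :
    genFun wordDegree (runWeight t) {w | IsPathFrom H (p + 1) w ∧ leadingUps w = 0} =
      pathSeries t H p + X 1 * pathSeries t H (p + 1) := by
  have hsplit : {w | IsPathFrom H (p + 1) w ∧ leadingUps w = 0} =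
      (Step.d :: ·) '' {w | IsPathFrom H p w} ∪
        (Step.h :: ·) '' {w | IsPathFrom H (p + 1) w} := by
    ext w
    rcases w with _ | ⟨_ | _ | _, w⟩ <;> simp [hH]
  have hfin : HasFiniteFibers wordDegree {w | IsPathFrom H (p + 1) w ∧ leadingUps w = 0} :=
    (hasFiniteFibers_isPathFrom H (p + 1)).mono fun _ hw => hw.1
  have hdisj : Disjoint ((Step.d :: ·) '' {w | IsPathFrom H p w})
      ((Step.h :: ·) '' {w | IsPathFrom H (p + 1) w}) := by
    refine Set.disjoint_left.2 ?_
    rintro _ ⟨v, -, rfl⟩ ⟨w, -, h⟩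
    simp at h
  rw [hsplit] at hfin ⊢
  rw [genFun_union (hfin.mono Set.subset_union_left) (hfin.mono Set.subset_union_right) hdisj,
    genFun_cons t (hasFiniteFibers_isPathFrom _ _) (by simp),
    genFun_cons t (hasFiniteFibers_isPathFrom _ _) (by simp),
    monomial_wordDegree_d, monomial_wordDegree_h, one_mul]
  rfl

lemma genFun_offAxis_succ_leadingUps_eq_zero (p : ℕ) :
    genFun wordDegree (runWeight t) {w | IsPathFrom OffAxis (p + 1) w ∧ leadingUps w = 0} =
      pathSeries t ⊤ 0 ^ (p + 1) := by
  set P := pathSeries t ⊤ 0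
  set Q := pathSeries t OffAxis 0
  calc _ = P ^ p * Q + X 1 * (P ^ (p + 1) * Q) := by
        rw [genFun_succ_leadingUps_eq_zero t p.succ_ne_zero, pathSeries_offAxis t p,
          pathSeries_offAxis t (p + 1)]
    _ = P ^ p * (Q * (1 + X 1 * P)) := by ring
    _ = P ^ (p + 1) := by rw [pathSeries_offAxis_mul, pow_succ]

lemma genFun_leadingUps_eq_succ (H : ℕ → Prop) (q p : ℕ) :
    genFun wordDegree (runWeight t) {w | IsPathFrom H q w ∧ leadingUps w = p + 1} =
      C (t (p + 1)) * X 0 ^ (p + 1) *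
        genFun wordDegree (runWeight t)
          {w | IsPathFrom H (q + (p + 1)) w ∧ leadingUps w = 0} := by
  have hsplit : {w | IsPathFrom H q w ∧ leadingUps w = p + 1} =
      (List.replicate (p + 1) Step.u ++ ·) ''
        {w | IsPathFrom H (q + (p + 1)) w ∧ leadingUps w = 0} := by
    ext w
    constructor
    · rintro ⟨hw, hlead⟩
      obtain ⟨v, hv, hwv⟩ := exists_eq_replicate_append w
      rw [hlead] at hwv
      subst hwv
      exact ⟨v, ⟨isPathFrom_replicate_append.1 hw, hv⟩, rfl⟩
    · rintro ⟨v, ⟨hv, hlead⟩, rfl⟩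
      exact ⟨isPathFrom_replicate_append.2 hv, by simp [leadingUps_replicate_append, hlead]⟩
  have hfin := (hasFiniteFibers_isPathFrom H (q + (p + 1))).mono
    fun w (hw : w ∈ {w | IsPathFrom H (q + (p + 1)) w ∧ leadingUps w = 0}) => hw.1
  have hdeg : wordDegree (List.replicate (p + 1) Step.u) = Finsupp.single 0 (p + 1) := by
    simp [wordDegree, List.count_replicate]
  have hwt : runWeight t (List.replicate (p + 1) Step.u) = t (p + 1) := by
    simp [runWeight, uRuns_replicate_succ]
  rw [hsplit, genFun_append_left t hfin _ fun _ hw => hw.2, hdeg, hwt, X_pow_eq,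
    ← monomial_zero_eq_C_apply, monomial_mul_monomial, zero_add, mul_one]

lemma genFun_offAxis_zero_leadingUps_eq_zero :
    genFun wordDegree (runWeight t) {w | IsPathFrom OffAxis 0 w ∧ leadingUps w = 0} = 1 := by
  rw [← genFun_singleton_nil t]
  congr 1
  ext w
  rcases w with _ | ⟨_ | _ | _, w⟩ <;> simp

lemma genFun_offAxis_leadingUps_le (m : ℕ) :
    genFun wordDegree (runWeight t) {w | IsPathFrom OffAxis 0 w ∧ leadingUps w ≤ m} =
      1 + ∑ p ∈ Icc 1 m, C (t p) * (X 0 * pathSeries t ⊤ 0) ^ p := by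
  have hfiber : ∀ p ∈ Icc 0 m,
      {w | w ∈ {w | IsPathFrom OffAxis 0 w ∧ leadingUps w ≤ m} ∧ leadingUps w = p} =
        {w | IsPathFrom OffAxis 0 w ∧ leadingUps w = p} := by
    intro p hp
    ext w
    have := (mem_Icc.1 hp).2
    grind
  rw [genFun_eq_sum_fiberwise ((hasFiniteFibers_isPathFrom OffAxis 0).mono fun _ hw => hw.1)
    fun w hw => mem_Icc.2 ⟨zero_le, hw.2⟩,
    sum_congr rfl fun p hp => by rw [hfiber p hp], ← add_sum_Ioc_eq_sum_Icc m.zero_le,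
    genFun_offAxis_zero_leadingUps_eq_zero, ← Icc_add_one_left_eq_Ioc, zero_add]
  refine congrArg (1 + ·) (sum_congr rfl fun p hp => ?_)
  obtain ⟨p, rfl⟩ := Nat.exists_eq_add_of_le' (mem_Icc.1 hp).1
  rw [genFun_leadingUps_eq_succ, zero_add, genFun_offAxis_succ_leadingUps_eq_zero, mul_pow,
    mul_assoc]

theorem stmt7_general :
    pathSeries t OffAxis 0 * (1 + X 1 * pathSeries t ⊤ 0) = pathSeries t ⊤ 0 ∧
    ∀ (n : Fin 2 →₀ ℕ) (m : ℕ), n 0 ≤ m →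
      coeff n (pathSeries t OffAxis 0) =
        coeff n (1 + ∑ p ∈ Icc 1 m, C (t p) * (X 0 * pathSeries t ⊤ 0) ^ p) := by
  refine ⟨pathSeries_offAxis_mul t, fun n m hnm => ?_⟩
  rw [← genFun_offAxis_leadingUps_le, pathSeries, coeff_genFun, coeff_genFun]
  refine finsum_mem_congr (Set.ext fun w => ?_) fun _ _ => rfl
  refine and_congr_left fun hw => (and_iff_left ?_).symm
  exact (leadingUps_le_count w).trans ((wordDegree_eq_iff.1 hw).1.trans_le hnm)

end PathSeries

theorem stmt7 (t : ℕ → ℚ) :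
    qGF t * (1 + MvPowerSeries.X 1 * pathGF t) = pathGF t ∧
    ∀ m j : ℕ,
      MvPowerSeries.coeff (Finsupp.single (0 : Fin 2) m + Finsupp.single (1 : Fin 2) j)
          (qGF t) =
      MvPowerSeries.coeff (Finsupp.single (0 : Fin 2) m + Finsupp.single (1 : Fin 2) j)
        (1 + ∑ p ∈ Finset.Icc 1 m,
          MvPowerSeries.C (t p) * (MvPowerSeries.X 0 * pathGF t) ^ p) := by
  rw [pathGF_eq_pathSeries, qGF_eq_pathSeries]
  exact (stmt7_general t).imp_right fun h m j => h _ m (by simp)
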